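/- Let f be a non-constant meromorphic function on ℂ of finite order, and let η be a non-zero complex number. Then there exists a set E ⊆ [1, ∞) of finite logarithmic measure (∫_E dt/t < ∞) such that m(r, f(z + η)/f(z)) / T(r, f) → 0 as r → ∞ with r ∉ E. -/

import Mathlib

/-!
The proof compares `log ‖f(z + η)‖` and `log ‖f(z)‖` through the Poisson–Jensen formula
(`poisson_jensen`) on a disc of radius `R > r + ‖η‖`. The Poisson integrals differ by at most
`2 R ‖η‖ / δ²` times the mean of `|log ‖f‖|` on `|z| = R`, where `δ` is the distance from the two points
to the circle. A zero or pole `a` contributes a difference of logarithms, which is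
`O(‖η‖^(1/2) (‖z - a‖^(-1/2) + ‖z + η - a‖^(-1/2)))` by `abs_log_sub_log_le`, up to a small term from
the boundary. The mean of `‖z - a‖^(-1/2)` over `|z| = r` is `O(r^(-1/2))` uniformly in `a`
(`circleAverage_inv_sqrt_le`), and by the first main theorem both the mean of `|log ‖f‖|` and the number
of zeros and poles are controlled by `T(R', f)` for some `R' > R`. The outcome is
`proximityM_quotient_le`.

With `R = r + r^(3/4) / 2`, `R' = r + r^(3/4)` and `δ = r^(3/4) / 4` the coefficient of `T(R', f)`
tends to zero (`tendsto_error`). Finite order makes `log T` grow at most like `log r`, so by the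
growth lemma `finiteLogMeasure_of_monotone` one has `T(r + r^(3/4)) ≤ 2 T(r)` for `r` outside a set
of finite logarithmic measure, and the claim follows.

If `T` vanishes on `[1, ∞)` (which happens, for instance, for a function that is zero
off a discrete set), the quotient in the statement is a division by zero, hence zero.
-/

open Filter Topology MeasureTheory

/-- `log⁺ x = max 0 (log x)`. -/
noncomputable def logPlus (x : ℝ) : ℝ := max 0 (Real.log x)

/-- The multiplicity of `z` as a pole of `f`: the least `n` such that
`(w - z)^n * f w` has a finite limit as `w → z`; it is `0` unless `z` is a pole. -/
noncomputable def poleMult (f : ℂ → ℂ) (z : ℂ) : ℕ :=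
  sInf {n : ℕ | ∃ c : ℂ, Filter.Tendsto (fun w => (w - z) ^ n * f w) (𝓝[≠] z) (𝓝 c)}

/-- `n(t, f)`: the number of poles of `f` in the closed disc `|z| ≤ t`,
counted with multiplicity. -/
noncomputable def poleCount (f : ℂ → ℂ) (t : ℝ) : ℝ :=
  ∑' z : ℂ, Set.indicator (Metric.closedBall (0 : ℂ) t) (fun w => (poleMult f w : ℝ)) z

/-- The Nevanlinna counting function
`N(r, f) = ∫₀ʳ (n(t,f) - n(0,f))/t dt + n(0,f) log r`. -/
noncomputable def countingN (f : ℂ → ℂ) (r : ℝ) : ℝ :=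
  (∫ t in (0:ℝ)..r, (poleCount f t - poleCount f 0) / t) + poleCount f 0 * Real.log r

/-- The Nevanlinna proximity function
`m(r, f) = (1/2π) ∫₀^{2π} log⁺ |f(r e^{iθ})| dθ`. -/
noncomputable def proximityM (f : ℂ → ℂ) (r : ℝ) : ℝ :=
  (2 * Real.pi)⁻¹ * ∫ θ in (0:ℝ)..(2 * Real.pi),
    logPlus ‖f ((r : ℂ) * Complex.exp (θ * Complex.I))‖

/-- The Nevanlinna characteristic `T(r, f) = m(r, f) + N(r, f)`. -/
noncomputable def charT (f : ℂ → ℂ) (r : ℝ) : ℝ := proximityM f r + countingN f r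

/-- The order of growth `λ(f) = limsup_{r→∞} log⁺ T(r,f) / log r`, in `EReal`. -/
noncomputable def growthOrder (f : ℂ → ℂ) : EReal :=
  Filter.limsup (fun r : ℝ => ((logPlus (charT f r) / Real.log r : ℝ) : EReal))
    Filter.atTop

/-- `E ⊆ [1, ∞)` has finite logarithmic measure: `∫_E dt/t < ∞`. -/
def FiniteLogMeasure (E : Set ℝ) : Prop :=
  MeasurableSet E ∧ E ⊆ Set.Ici 1 ∧ (∫⁻ t in E, ENNReal.ofReal t⁻¹) < ⊤

/-! ### Comparison with the value distribution theory of Mathlib -/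

/-- The limit-based pole multiplicity is the negative part of the divisor. -/
lemma poleMult_eq {f : ℂ → ℂ} (hf : MeromorphicOn f Set.univ) (z : ℂ) :
    (poleMult f z : ℤ) = (MeromorphicOn.divisor f Set.univ)⁻ z := by
  have key : ∀ n : ℕ, (∃ c : ℂ, Filter.Tendsto (fun w => (w - z) ^ n * f w) (𝓝[≠] z) (𝓝 c)) ↔
      0 ≤ (n : WithTop ℤ) + meromorphicOrderAt f z := by
    intro n
    have h1 : MeromorphicAt (fun w : ℂ => (w - z) ^ n) z := by fun_prop
    have h2 : meromorphicOrderAt (fun w : ℂ => (w - z) ^ n) z = (n : WithTop ℤ) := by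
      have := (meromorphicOrderAt_eq_int_iff h1 (n := (n : ℤ))).2
        ⟨fun _ => 1, analyticAt_const, one_ne_zero, by
          filter_upwards with w
          simp⟩
      rw [this]
      rfl
    rw [← h2, ← meromorphicOrderAt_mul h1 (hf z trivial),
      ← tendsto_nhds_iff_meromorphicOrderAt_nonneg (h1.mul (hf z trivial))]
    rfl
  have hset : {n : ℕ | ∃ c : ℂ, Filter.Tendsto (fun w => (w - z) ^ n * f w) (𝓝[≠] z) (𝓝 c)}
      = {n : ℕ | 0 ≤ (n : WithTop ℤ) + meromorphicOrderAt f z} := by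
    ext n
    exact key n
  unfold poleMult
  rw [hset]
  rw [Function.locallyFinsuppWithin.negPart_apply, hf.divisor_apply (Set.mem_univ z)]
  cases h : meromorphicOrderAt f z with
  | top =>
    simp only [add_top, le_top, WithTop.untop₀_top]
    simp
  | coe k =>
    have : {n : ℕ | 0 ≤ (n : WithTop ℤ) + (k : WithTop ℤ)} = Set.Ici (-k).toNat := by
      ext n
      simp only [Set.mem_ofPred_eq, Set.mem_Ici, Int.toNat_le]
      rw [show ((n : WithTop ℤ) + (k : WithTop ℤ)) = (((n : ℤ) + k : ℤ) : WithTop ℤ) from rfl]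
      rw [← WithTop.coe_zero, WithTop.coe_le_coe]
      omega
    rw [this, csInf_Ici, WithTop.untop₀_coe, Int.toNat_eq_max]
    rfl

lemma proximityM_eq (g : ℂ → ℂ) (r : ℝ) :
    proximityM g r = Real.circleAverage (fun z => Real.posLog ‖g z‖) 0 r := by
  unfold proximityM Real.circleAverage
  rw [smul_eq_mul]
  congr 1
  apply intervalIntegral.integral_congr
  intro θ _
  simp [logPlus, Real.posLog, circleMap]

open Function in
/-- The integral formula for the counting function agrees with the sum `∑ D(z) log (r / |z|)`
that defines `logCounting`: each point `z ≠ 0` contributes `∫ D(z) dt/t` over `[|z|, r]`. -/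
lemma counting_bridge (D : locallyFinsupp ℂ ℤ) {r : ℝ} (hr : 0 < r) (c : ℝ → ℝ)
    (hc : ∀ t, c t = ∑' z : ℂ, Set.indicator (Metric.closedBall (0 : ℂ) t) (fun w => (D w : ℝ)) z) :
    (∫ t in (0:ℝ)..r, (c t - c 0) / t) + c 0 * Real.log r
      = locallyFinsuppWithin.logCounting D r := by
  classical
  have hfin : (locallyFinsuppWithin.toClosedBall r D).support.Finite :=
    (locallyFinsuppWithin.toClosedBall r D).finiteSupport (isCompact_closedBall 0 |r|)
  set S := hfin.toFinset with hS
  have hSmem : ∀ z, z ∈ S ↔ ‖z‖ ≤ r ∧ D z ≠ 0 := by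
    intro z
    by_cases h : z ∈ Metric.closedBall (0 : ℂ) |r|
    · simp only [hS, Set.Finite.mem_toFinset, Function.mem_support,
        locallyFinsuppWithin.toClosedBall_eval_within D h]
      simp [abs_of_pos hr] at h
      simp [h]
    · have : z ∉ S := fun hz => h (locallyFinsuppWithin.toClosedBall_support_subset_closedBall D
        (by simpa [hS] using hz))
      simp [abs_of_pos hr] at h
      simp [this, h]
  have hct : ∀ t ≤ r, c t = ∑ z ∈ S, if ‖z‖ ≤ t then (D z : ℝ) else 0 := by
    intro t ht
    rw [hc, tsum_eq_sum (s := S)]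
    · apply Finset.sum_congr rfl
      intro z _
      simp [Set.indicator_apply]
    · intro z hz
      rw [hSmem, not_and_or, not_not] at hz
      rw [Set.indicator_apply]
      split_ifs with h
      · rcases hz with h' | h'
        · exact absurd ((mem_closedBall_zero_iff.1 h).trans ht) h'
        · simp [h']
      · rfl
  have hc0 : c 0 = D 0 := by
    rw [hct 0 hr.le]
    simp only [norm_le_zero_iff, Finset.sum_ite_eq']
    split_ifs with h
    · rfl
    · rw [hSmem] at h
      simp [hr.le] at h
      simp [h]
  set g : ℂ → ℝ → ℝ := fun z => Set.indicator (Set.Ici ‖z‖) (fun t => (D z : ℝ) * t⁻¹) with hg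
  have hgint : ∀ z ∈ S.erase 0, IntervalIntegrable (g z) volume 0 r ∧
      ∫ t in (0:ℝ)..r, g z t = D z * Real.log (r * ‖z‖⁻¹) := by
    intro z hz
    rw [Finset.mem_erase, hSmem] at hz
    have hz0 : 0 < ‖z‖ := norm_pos_iff.2 hz.1
    have hset : Set.Ici ‖z‖ ∩ Set.Ioc 0 r = Set.Icc ‖z‖ r := by
      ext t
      simp only [Set.mem_inter_iff, Set.mem_Ici, Set.mem_Ioc, Set.mem_Icc]
      constructor
      · rintro ⟨a, b, c⟩; exact ⟨a, c⟩
      · rintro ⟨a, b⟩; exact ⟨a, hz0.trans_le a, b⟩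
    constructor
    · rw [intervalIntegrable_iff_integrableOn_Ioc_of_le hr.le, IntegrableOn,
        integrable_indicator_iff measurableSet_Ici, IntegrableOn,
        Measure.restrict_restrict measurableSet_Ici, hset]
      apply ContinuousOn.integrableOn_Icc
      apply ContinuousOn.mul continuousOn_const
      apply ContinuousOn.inv₀ continuousOn_id
      intro t ht
      exact (hz0.trans_le ht.1).ne'
    · rw [intervalIntegral.integral_of_le hr.le, integral_indicator measurableSet_Ici,
        Measure.restrict_restrict measurableSet_Ici, hset, integral_Icc_eq_integral_Ioc,
        ← intervalIntegral.integral_of_le hz.2.1, intervalIntegral.integral_const_mul,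
        integral_inv_of_pos hz0 hr, div_eq_mul_inv]
  have hint : ∫ t in (0:ℝ)..r, (c t - c 0) / t = ∫ t in (0:ℝ)..r, ∑ z ∈ S.erase 0, g z t := by
    apply intervalIntegral.integral_congr_ae
    apply Filter.Eventually.of_forall
    intro t ht
    rw [Set.uIoc_of_le hr.le] at ht
    rw [hct t ht.2, hct 0 hr.le, ← Finset.sum_sub_distrib, Finset.sum_div]
    symm
    refine (Finset.sum_congr rfl ?_).trans (Finset.sum_subset (Finset.erase_subset 0 S) ?_)
    · intro z hz
      have hz0 : ¬ ‖z‖ ≤ 0 := by simpa using (Finset.mem_erase.1 hz).1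
      simp only [hg, Set.indicator_apply, Set.mem_Ici, if_neg hz0, sub_zero]
      split_ifs
      · rw [div_eq_mul_inv]
      · simp
    · intro z hz hz'
      have hz0 : z = 0 := by
        by_contra h
        exact hz' (Finset.mem_erase.2 ⟨h, hz⟩)
      simp [hz0, ht.1.le]
  have hlc : locallyFinsuppWithin.logCounting D r =
      ∑ᶠ z, D.toClosedBall r z * Real.log (r * ‖z‖⁻¹) + (D 0) * Real.log r := rfl
  rw [hlc, hint, hc0, intervalIntegral.integral_finsetSum (fun z hz => (hgint z hz).1)]
  congr 1
  rw [finsum_eq_sum_of_support_subset (s := S.erase 0)]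
  · apply Finset.sum_congr rfl
    intro z hz
    rw [(hgint z hz).2, locallyFinsuppWithin.toClosedBall_eval_within]
    rw [Finset.mem_erase, hSmem] at hz
    simpa [abs_of_pos hr] using hz.2.1
  · intro z hz
    simp only [Function.mem_support] at hz
    simp only [Finset.coe_erase, Set.mem_sdiff, Finset.mem_coe, Set.mem_singleton_iff, hS,
      Set.Finite.mem_toFinset, Function.mem_support]
    refine ⟨fun h => hz (by simp [h]), ?_⟩
    rintro rfl
    simp at hz

/-- The characteristic defined here is that of Mathlib, for positive radii. -/
lemma charT_eq {f : ℂ → ℂ} (hf : MeromorphicOn f Set.univ) {r : ℝ} (hr : 0 < r) :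
    charT f r = ValueDistribution.characteristic f ⊤ r := by
  unfold charT ValueDistribution.characteristic
  rw [Pi.add_apply, proximityM_eq, ValueDistribution.proximity_top, ValueDistribution.logCounting_top]
  congr 1
  exact counting_bridge _ hr _ (fun t => by
    unfold poleCount
    congr! 3 with z
    funext w
    rw [← poleMult_eq hf]; simp)

/-! ### The Poisson–Jensen formula -/

open MeromorphicOn in
/-- Off a discrete set, `f` is analytic and non-zero. -/
lemma eventually_good {f : ℂ → ℂ} (hf : Meromorphic f) (hord : ∀ z, meromorphicOrderAt f z ≠ ⊤)
    (U : Set ℂ) : ∀ᶠ z in Filter.codiscreteWithin U, AnalyticAt ℂ f z ∧ f z ≠ 0 := by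
  have h : MeromorphicOn f U := fun z _ => hf z
  filter_upwards [h.analyticAt_mem_codiscreteWithin,
    h.eventually_codiscreteWithin_apply_ne_zero (fun z _ => hord z)] with z h1 h2
  exact ⟨h1, h2⟩

lemma good_order {f : ℂ → ℂ} {z : ℂ} (h : AnalyticAt ℂ f z ∧ f z ≠ 0) :
    meromorphicOrderAt f z = 0 := by
  rw [h.1.meromorphicOrderAt_eq, h.1.analyticOrderAt_eq_zero.2 h.2]
  rfl

open Real Complex Metric MeromorphicOn ValueDistribution in
/-- **Poisson–Jensen formula** at a point where `f` has neither zero nor pole. It comes from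
decomposing `f` into canonical factors of its zeros and poles in the open disc, linear factors of
those on the boundary circle, and a zero-free analytic `h`; the Poisson formula applies to
`log ‖h‖`. Zeros and poles on the circle `|z| = R` are allowed. -/
lemma poisson_jensen {f : ℂ → ℂ} (hf : Meromorphic f) (hord : ∀ z, meromorphicOrderAt f z ≠ ⊤)
    {R : ℝ} {w : ℂ} (hw : w ∈ ball (0 : ℂ) R) (hw0 : meromorphicOrderAt f w = 0) :
    Real.log ‖meromorphicTrailingCoeffAt f w‖ =
      Real.circleAverage ((Complex.re ∘ herglotzRieszKernel 0 w) • (fun z => Real.log ‖f z‖)) 0 R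
      - ∑ᶠ i, (divisor f (ball 0 R) i) * Real.log ‖canonicalFactor R i w‖ := by
  have hR : 0 < R := pos_of_mem_ball hw
  have hfm : MeromorphicOn f (closedBall 0 R) := fun z _ => hf z
  obtain ⟨h, D⟩ := hfm.exists_ecanonicalDecomp (fun u => hord u)
  have hlog := D.log_norm_eq (ball_subset_closedBall hw) hw0 hR
  have hfin : (divisor f (sphere 0 R)).support.Finite := by
    exact (divisor f (sphere 0 R)).finiteSupport (isCompact_sphere 0 R)
  have hharm : InnerProductSpace.HarmonicOnNhd (fun z => Real.log ‖h z‖) (closedBall 0 R) :=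
    fun z hz => (D.analyticOnNhd z hz).harmonicAt_log_norm (D.ne_zero z hz)
  have hP := hharm.circleAverage_re_herglotzRieszKernel_smul hw
  set P := Complex.re ∘ herglotzRieszKernel 0 w with hPdef
  have hPc : ContinuousOn P (sphere 0 |R|) :=
    Complex.continuous_re.comp_continuousOn (continuousOn_herglotzRieszKernel_sphere hw)
  set S := hfin.toFinset
  have hcongr : (P • (fun z => Real.log ‖h z‖)) =ᶠ[Filter.codiscreteWithin (sphere 0 |R|)]
      (P • (fun z => Real.log ‖f z‖)) - ∑ i ∈ S, (divisor f (sphere 0 R) i : ℝ) • (P • (fun z => Real.log ‖z - i‖)) := by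
    filter_upwards [eventually_good hf hord (sphere 0 |R|),
      Filter.self_mem_codiscreteWithin (sphere (0 : ℂ) |R|)] with z hz hzR
    rw [abs_of_pos hR] at hzR
    have h1 := D.log_norm_eq (sphere_subset_closedBall hzR) (good_order hz) hR
    rw [hz.1.meromorphicTrailingCoeffAt_of_ne_zero hz.2] at h1
    -- canonical factors have modulus one on the boundary circle
    have h2 : ∑ᶠ i, (divisor f (ball 0 R) i) * Real.log ‖canonicalFactor R i z‖ = 0 := by
      apply finsum_eq_zero_of_forall_eq_zero
      intro i
      by_cases hi : divisor f (ball 0 R) i = 0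
      · simp [hi]
      · rw [norm_canonicalFactor_eval_circle_eq_one
          ((divisor f (ball 0 R)).supportWithinDomain hi) hzR]
        simp
    rw [h2, finsum_eq_sum_of_support_subset (s := S) _ (by
      intro i hi
      simp only [Function.mem_support] at hi
      simp [S]
      aesop)] at h1
    simp only [Pi.smul_apply', Pi.sub_apply, Finset.sum_apply, Pi.smul_apply, smul_eq_mul]
    rw [h1, zero_sub, neg_add_eq_sub, mul_sub, Finset.mul_sum]
    congr 1
    exact Finset.sum_congr rfl fun i _ => by rw [Pi.mul_apply]; ring
  rw [circleAverage_congr_codiscreteWithin hcongr hR.ne'] at hP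
  have hI1 : CircleIntegrable (P • (fun z => Real.log ‖f z‖)) 0 R := by
    refine CircleIntegrable.continuousOn_smul ?_ hPc
    exact MeromorphicOn.circleIntegrable_log_norm (fun z _ => hf z)
  have hI2 : ∀ i ∈ S, CircleIntegrable ((divisor f (sphere 0 R) i : ℝ) • (P • (fun z => Real.log ‖z - i‖))) 0 R := by
    intro i _
    refine CircleIntegrable.const_smul (CircleIntegrable.continuousOn_smul ?_ hPc)
    exact circleIntegrable_log_norm_sub_const R
  rw [circleAverage_sub hI1 (CircleIntegrable.sum S hI2), circleAverage_sum hI2] at hP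
  have hsum : ∑ i ∈ S, circleAverage ((divisor f (sphere 0 R) i : ℝ) • (P • (fun z => Real.log ‖z - i‖))) 0 R
      = ∑ᶠ i, (divisor f (sphere 0 R) i) * Real.log ‖w - i‖ := by
    rw [finsum_eq_sum_of_support_subset (s := S)]
    · apply Finset.sum_congr rfl
      intro i hi
      rw [circleAverage_smul, smul_eq_mul]
      congr 1
      have hi' : i ∈ sphere (0 : ℂ) R :=
        (divisor f (sphere 0 R)).supportWithinDomain (by simpa [S] using hi)
      exact circleAverage_re_herglotzRieszKernel_mul_log₀ hi' hw
    · intro i hi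
      simp only [Function.mem_support] at hi
      simp [S]
      aesop
  rw [hsum] at hP
  linarith

/-! ### Circle means of inverse square roots -/

/-- An integrable majorant of `|sin θ|^{-1/2}` on `[0, 2π]`, singular at the zeros of `sin`. -/
noncomputable def sinMajorant (θ : ℝ) : ℝ :=
  √(Real.pi / 2) * ((√|θ|)⁻¹ + (√|θ - Real.pi|)⁻¹ + (√|θ - 2 * Real.pi|)⁻¹)

lemma intervalIntegrable_inv_sqrt_abs (a b : ℝ) :
    IntervalIntegrable (fun x : ℝ => (√|x|)⁻¹) volume a b := by
  have h0 : ∀ c : ℝ, 0 ≤ c → IntervalIntegrable (fun x : ℝ => (√|x|)⁻¹) volume 0 c := by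
    intro c hc
    refine (intervalIntegral.intervalIntegrable_rpow' (a := 0) (b := c) (r := -(1 / 2))
      (by norm_num)).congr ?_
    intro x hx
    rw [Set.uIoc_of_le hc] at hx
    simp only
    rw [abs_of_pos hx.1, Real.sqrt_eq_rpow, Real.rpow_neg hx.1.le]
  have h1 : ∀ c : ℝ, IntervalIntegrable (fun x : ℝ => (√|x|)⁻¹) volume 0 c := by
    intro c
    rcases le_total 0 c with hc | hc
    · exact h0 c hc
    · have := (IntervalIntegrable.iff_comp_neg).1 (h0 (-c) (by linarith))
      simpa using this
  exact (h1 a).symm.trans (h1 b)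

lemma intervalIntegrable_sinMajorant (a b : ℝ) : IntervalIntegrable sinMajorant volume a b := by
  have hs : ∀ c : ℝ, IntervalIntegrable (fun x : ℝ => (√|x - c|)⁻¹) volume a b := fun c => by
    simpa using (intervalIntegrable_inv_sqrt_abs (a - c) (b - c)).comp_sub_right c
  exact (((intervalIntegrable_inv_sqrt_abs a b).add (hs _)).add (hs _)).const_mul _

lemma inv_sqrt_abs_sin_le {θ : ℝ} (h0 : 0 ≤ θ) (h1 : θ ≤ 2 * Real.pi) :
    (√|Real.sin θ|)⁻¹ ≤ sinMajorant θ := by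
  have hpi := Real.pi_pos
  -- Jordan's inequality at a zero of `sin`
  have key : ∀ x : ℝ, |x| ≤ Real.pi / 2 →
      (√|Real.sin x|)⁻¹ ≤ √(Real.pi / 2) * (√|x|)⁻¹ := by
    intro x hx
    by_cases hx0 : x = 0
    · simp [hx0]
    have hxp : 0 < |x| := abs_pos.2 hx0
    have hj : 2 / Real.pi * |x| ≤ |Real.sin x| := by
      have := Real.mul_le_sin (abs_nonneg x) hx
      refine this.trans ?_
      rcases le_total 0 x with h | h
      · rw [abs_of_nonneg h]; exact le_abs_self _
      · rw [abs_of_nonpos h, Real.sin_neg]; exact neg_le_abs _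
    have e : √(Real.pi / 2) * (√|x|)⁻¹ = (√(2 / Real.pi * |x|))⁻¹ := by
      rw [Real.sqrt_mul (by positivity), mul_inv, ← Real.sqrt_inv (2 / Real.pi), inv_div]
    rw [e]
    apply inv_anti₀ (by positivity)
    exact Real.sqrt_le_sqrt hj
  unfold sinMajorant
  have p1 : 0 ≤ √(Real.pi / 2) * (√|θ|)⁻¹ := by positivity
  have p2 : 0 ≤ √(Real.pi / 2) * (√|θ - Real.pi|)⁻¹ := by positivity
  have p3 : 0 ≤ √(Real.pi / 2) * (√|θ - 2 * Real.pi|)⁻¹ := by positivity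
  rw [mul_add, mul_add]
  rcases le_total θ (Real.pi / 2) with h | h
  · have := key θ (by rw [abs_of_nonneg h0]; exact h)
    linarith
  rcases le_total θ (3 * Real.pi / 2) with h' | h'
  · have := key (θ - Real.pi) (by rw [abs_le]; constructor <;> linarith)
    rw [Real.sin_sub_pi, abs_neg] at this
    linarith
  · have := key (θ - 2 * Real.pi) (by rw [abs_le]; constructor <;> linarith)
    rw [Real.sin_sub_two_pi] at this
    linarith

/-- Measuring the angle from `arg a`, the distance from the point of angle `θ` on `|z| = r` to `a` is
at least its distance `r |sin θ|` to the line through `0` and `a`. -/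
lemma inv_sqrt_norm_circleMap_le {r : ℝ} (hr : 0 < r) (a : ℂ) {θ : ℝ} (h0 : 0 ≤ θ)
    (h1 : θ ≤ 2 * Real.pi) (hs : Real.sin θ ≠ 0) :
    (√‖circleMap 0 r (θ + a.arg) - a‖)⁻¹ ≤ (√r)⁻¹ * sinMajorant θ := by
  have hnorm : r * |Real.sin θ| ≤ ‖circleMap 0 r (θ + a.arg) - a‖ := by
    have e : circleMap 0 r (θ + a.arg) - a =
        (circleMap 0 r θ - (‖a‖ : ℂ)) * Complex.exp (a.arg * Complex.I) := by
      have ha := Complex.norm_mul_exp_arg_mul_I a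
      simp only [circleMap, zero_add, Complex.ofReal_add, add_mul, Complex.exp_add]
      linear_combination ha
    rw [e, norm_mul, Complex.norm_exp_ofReal_mul_I, mul_one]
    refine le_trans (le_of_eq ?_) (Complex.abs_im_le_norm _)
    simp [circleMap, Complex.exp_ofReal_mul_I_im, abs_mul, abs_of_pos hr]
  have hsp : 0 < |Real.sin θ| := abs_pos.2 hs
  calc (√‖circleMap 0 r (θ + a.arg) - a‖)⁻¹ ≤ (√(r * |Real.sin θ|))⁻¹ := by
        apply inv_anti₀ (by positivity)
        exact Real.sqrt_le_sqrt hnorm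
    _ = (√r)⁻¹ * (√|Real.sin θ|)⁻¹ := by rw [Real.sqrt_mul hr.le, mul_inv]
    _ ≤ _ := by gcongr; exact inv_sqrt_abs_sin_le h0 h1

/-- The universal constant in the mean value bound for `‖z - a‖^{-1/2}`. -/
noncomputable def sinConst : ℝ := (2 * Real.pi)⁻¹ * ∫ θ in (0:ℝ)..(2 * Real.pi), sinMajorant θ

lemma ae_sin_ne_zero : ∀ᵐ θ : ℝ, Real.sin θ ≠ 0 := by
  have : {θ : ℝ | Real.sin θ = 0} = Set.range (fun n : ℤ => (n : ℝ) * Real.pi) := by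
    ext θ
    simp [Real.sin_eq_zero_iff]
  have hc : ({θ : ℝ | Real.sin θ = 0}).Countable := this ▸ Set.countable_range _
  have := hc.measure_zero volume
  rw [ae_iff]
  simpa using this

lemma ae_inv_sqrt_le {r : ℝ} (hr : 0 < r) (a : ℂ) :
    ∀ᵐ θ ∂(volume.restrict (Set.Ioc 0 (2 * Real.pi))),
      (√‖circleMap 0 r (θ + a.arg) - a‖)⁻¹ ≤ (√r)⁻¹ * sinMajorant θ := by
  filter_upwards [ae_restrict_of_ae ae_sin_ne_zero, ae_restrict_mem measurableSet_Ioc] with θ h1 h2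
  exact inv_sqrt_norm_circleMap_le hr a h2.1.le h2.2 h1

lemma intervalIntegrable_inv_sqrt_shift {r : ℝ} (hr : 0 < r) (a : ℂ) :
    IntervalIntegrable (fun θ => (√‖circleMap 0 r (θ + a.arg) - a‖)⁻¹) volume 0 (2 * Real.pi) := by
  refine ((intervalIntegrable_sinMajorant 0 (2 * Real.pi)).const_mul (√r)⁻¹).mono_fun ?_ ?_
  · apply Measurable.aestronglyMeasurable
    have : Measurable (circleMap 0 r) := (continuous_circleMap 0 r).measurable
    fun_prop
  · rw [Set.uIoc_of_le Real.two_pi_pos.le]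
    filter_upwards [ae_inv_sqrt_le hr a] with θ h
    rw [Real.norm_of_nonneg (by positivity)]
    exact h.trans (le_abs_self _)

lemma circleIntegrable_inv_sqrt {r : ℝ} (hr : 0 < r) (a : ℂ) :
    CircleIntegrable (fun z => (√‖z - a‖)⁻¹) 0 r := by
  have h := (intervalIntegrable_inv_sqrt_shift hr a).comp_sub_right a.arg
  simp only [sub_add_cancel, zero_add] at h
  have hp : Function.Periodic (fun θ => (√‖circleMap 0 r θ - a‖)⁻¹) (2 * Real.pi) := by
    intro θ
    simp only [periodic_circleMap 0 r θ]
  rw [add_comm] at h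
  exact hp.intervalIntegrable Real.two_pi_pos.ne' h 0 (2 * Real.pi)

/-- The mean of `‖z - a‖^{-1/2}` over the circle `|z| = r` is `O(r^{-1/2})`, uniformly in `a`. -/
lemma circleAverage_inv_sqrt_le {r : ℝ} (hr : 0 < r) (a : ℂ) :
    Real.circleAverage (fun z => (√‖z - a‖)⁻¹) 0 r ≤ (√r)⁻¹ * sinConst := by
  rw [Real.circleAverage_eq_integral_add a.arg, smul_eq_mul, sinConst, mul_left_comm]
  gcongr
  rw [← intervalIntegral.integral_const_mul]
  apply intervalIntegral.integral_mono_ae_restrict Real.two_pi_pos.le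
    (intervalIntegrable_inv_sqrt_shift hr a)
    ((intervalIntegrable_sinMajorant 0 (2 * Real.pi)).const_mul (√r)⁻¹)
  rw [restrict_Ioc_eq_restrict_Icc.symm]
  exact ae_inv_sqrt_le hr a

lemma sinConst_nonneg : 0 ≤ sinConst := by
  unfold sinConst
  have : 0 ≤ ∫ θ in (0:ℝ)..(2 * Real.pi), sinMajorant θ :=
    intervalIntegral.integral_nonneg Real.two_pi_pos.le
      (fun θ _ => by unfold sinMajorant; positivity)
  have := Real.pi_pos
  positivity

/-! ### A growth lemma for monotone functions -/

/-- On `[a, 2a]`, the integral of `u(r + D) - u(r)` telescopes to at most `D (u(4a) - u(a))`, so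
Markov's inequality bounds the set where the increment exceeds `log 2`. -/
lemma vol_bound {u : ℝ → ℝ} (hu : Monotone u) {a D : ℝ} (ha : 0 ≤ a) (hD : 0 ≤ D) (hDa : D ≤ 2 * a) :
    volume ({r | u r + Real.log 2 < u (r + D)} ∩ Set.Icc a (2 * a)) ≤
      ENNReal.ofReal ((Real.log 2)⁻¹ * (D * (u (4 * a) - u a))) := by
  have hmono : ∀ x y, IntervalIntegrable u volume x y := fun x y => hu.intervalIntegrable
  have hs : ∀ x y, IntervalIntegrable (fun r => u (r + D)) volume x y := fun x y =>
    Monotone.intervalIntegrable (fun a b h => hu (by linarith))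
  have hlog : 0 < Real.log 2 := Real.log_pos (by norm_num)
  have hint : ∫ r in a..(2 * a), (u (r + D) - u r) ≤ D * (u (4 * a) - u a) := by
    rw [intervalIntegral.integral_sub (hs _ _) (hmono _ _),
      intervalIntegral.integral_comp_add_right (fun x => u x) D]
    have e1 : (∫ x in (a + D)..(2 * a + D), u x) - ∫ x in a..(2 * a), u x =
        (∫ x in (2 * a)..(2 * a + D), u x) - ∫ x in a..(a + D), u x := by
      rw [intervalIntegral.integral_interval_sub_interval_comm' (hmono _ _) (hmono _ _) (hmono _ _)]
    rw [e1]
    have b1 : (∫ x in (2 * a)..(2 * a + D), u x) ≤ ∫ x in (2 * a)..(2 * a + D), u (4 * a) := by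
      apply intervalIntegral.integral_mono_on (by linarith) (hmono _ _) (by simp)
      intro x hx
      exact hu (by linarith [hx.2])
    have b2 : (∫ x in a..(a + D), u a) ≤ ∫ x in a..(a + D), u x := by
      apply intervalIntegral.integral_mono_on (by linarith) (by simp) (hmono _ _)
      intro x hx
      exact hu hx.1
    simp only [intervalIntegral.integral_const, smul_eq_mul, add_sub_cancel_left] at b1 b2
    linarith
  have hmeas : Measurable (fun r => u (r + D) - u r) :=
    (hu.measurable.comp (measurable_id.add_const D)).sub hu.measurable
  have hnn : ∀ r, 0 ≤ u (r + D) - u r := fun r => sub_nonneg.2 (hu (by linarith))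
  have key := mul_meas_ge_le_lintegral₀ (μ := volume.restrict (Set.Icc a (2 * a)))
    (f := fun r => ENNReal.ofReal (u (r + D) - u r)) hmeas.ennreal_ofReal.aemeasurable
    (ENNReal.ofReal (Real.log 2))
  rw [← ofReal_integral_eq_lintegral_ofReal, integral_Icc_eq_integral_Ioc, ← intervalIntegral.integral_of_le (by linarith)] at key
  · have h1 : volume ({r | u r + Real.log 2 < u (r + D)} ∩ Set.Icc a (2 * a)) ≤
        (volume.restrict (Set.Icc a (2 * a)))
          {x | ENNReal.ofReal (Real.log 2) ≤ ENNReal.ofReal (u (x + D) - u x)} := by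
      rw [Measure.restrict_apply' measurableSet_Icc]
      apply measure_mono
      apply Set.inter_subset_inter_left
      intro x hx
      simp only [Set.mem_ofPred_eq] at hx ⊢
      exact ENNReal.ofReal_le_ofReal (by linarith)
    refine h1.trans ?_
    rw [ENNReal.ofReal_mul (by positivity), ENNReal.ofReal_inv_of_pos hlog,
      mul_comm (ENNReal.ofReal (Real.log 2))⁻¹,
      ← div_eq_mul_inv, ENNReal.le_div_iff_mul_le (by simp [hlog]) (by simp),
      mul_comm _ (ENNReal.ofReal (Real.log 2))]
    exact key.trans (ENNReal.ofReal_le_ofReal hint)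
  · have := (intervalIntegrable_iff_integrableOn_Icc_of_le (by linarith : a ≤ 2 * a)).1
      ((hs a (2 * a)).sub (hmono a (2 * a)))
    exact this
  · exact Filter.Eventually.of_forall hnn

/-- A Borel-type growth lemma: a monotone function of at most logarithmic growth increases by more
than `log 2` over the step `r^(3/4)` only on a set of finite logarithmic measure. By `vol_bound`
the dyadic block `[2^k, 2^(k+1)]` contributes `O(k 2^(-k/4))`. -/
lemma finiteLogMeasure_of_monotone {u : ℝ → ℝ} (hu : Monotone u) {K C : ℝ}
    (hb : ∀ r, 1 ≤ r → u r ≤ K * Real.log r + C) :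
    FiniteLogMeasure {r : ℝ | 1 < r ∧ u r + Real.log 2 < u (r + r ^ (3 / 4 : ℝ))} := by
  set E := {r : ℝ | 1 < r ∧ u r + Real.log 2 < u (r + r ^ (3 / 4 : ℝ))} with hE
  have hlog : 0 < Real.log 2 := Real.log_pos (by norm_num)
  have hEm : MeasurableSet E := by
    apply MeasurableSet.inter measurableSet_Ioi
    refine measurableSet_lt (hu.measurable.add_const _) (hu.measurable.comp ?_)
    fun_prop
  refine ⟨hEm, fun r hr => hr.1.le, ?_⟩
  have hcover : E ⊆ ⋃ k : ℕ, E ∩ Set.Icc (2 ^ k : ℝ) (2 * 2 ^ k) := by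
    intro r hr
    obtain ⟨n, hn1, hn2⟩ := exists_nat_pow_near (x := r) (y := 2) hr.1.le (by norm_num)
    exact Set.mem_iUnion.2 ⟨n, hr, hn1, by rw [pow_succ] at hn2; linarith⟩
  -- `B k` bounds the logarithmic measure of the `k`-th dyadic block
  set B : ℕ → ℝ := fun k => (2 ^ k : ℝ)⁻¹ * ((Real.log 2)⁻¹ *
    ((2 * 2 ^ k : ℝ) ^ (3 / 4 : ℝ) * (u (4 * 2 ^ k) - u (2 ^ k)))) with hB
  have hBnn : ∀ k, 0 ≤ B k := fun k => by
    have : u (2 ^ k) ≤ u (4 * 2 ^ k) := hu (by nlinarith [pow_pos (zero_lt_two' ℝ) k])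
    have : 0 ≤ u (4 * 2 ^ k) - u (2 ^ k) := by linarith
    positivity
  have hblock : ∀ k : ℕ, ∫⁻ t in E ∩ Set.Icc (2 ^ k : ℝ) (2 * 2 ^ k), ENNReal.ofReal t⁻¹ ≤
      ENNReal.ofReal (B k) := by
    intro k
    have h2k : (1 : ℝ) ≤ 2 ^ k := one_le_pow₀ (by norm_num)
    calc ∫⁻ t in E ∩ Set.Icc (2 ^ k : ℝ) (2 * 2 ^ k), ENNReal.ofReal t⁻¹
        ≤ ∫⁻ t in E ∩ Set.Icc (2 ^ k : ℝ) (2 * 2 ^ k), ENNReal.ofReal (2 ^ k : ℝ)⁻¹ := by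
          apply setLIntegral_mono' (hEm.inter measurableSet_Icc)
          intro x hx
          apply ENNReal.ofReal_le_ofReal
          have := hx.2.1
          gcongr
      _ = ENNReal.ofReal (2 ^ k : ℝ)⁻¹ * volume (E ∩ Set.Icc (2 ^ k : ℝ) (2 * 2 ^ k)) := by
          rw [setLIntegral_const]
      _ ≤ ENNReal.ofReal (B k) := by
          rw [hB, ENNReal.ofReal_mul (by positivity)]
          gcongr
          refine le_trans (measure_mono ?_) (vol_bound hu (a := 2 ^ k)
            (D := (2 * 2 ^ k : ℝ) ^ (3 / 4 : ℝ)) (by positivity) (by positivity) ?_)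
          · rintro r ⟨hr1, hr2⟩
            refine ⟨lt_of_lt_of_le hr1.2 (hu ?_), hr2⟩
            have := hr2.2
            have := hr1.1
            gcongr
          · calc (2 * 2 ^ k : ℝ) ^ (3 / 4 : ℝ) ≤ (2 * 2 ^ k : ℝ) ^ (1 : ℝ) := by
                  apply Real.rpow_le_rpow_of_exponent_le <;> linarith
              _ = _ := by simp
  have hsum : Summable B := by
    set q : ℝ := (2 : ℝ) ^ (-(1 / 4) : ℝ) with hq
    have hq0 : 0 < q := by positivity
    have hq1 : q < 1 := Real.rpow_lt_one_of_one_lt_of_neg (by norm_num) (by norm_num)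
    have hs1 : Summable (fun k : ℕ => (k : ℝ) ^ 1 * q ^ k) :=
      summable_pow_mul_geometric_of_norm_lt_one 1 (by rwa [Real.norm_of_nonneg hq0.le])
    have hs0 : Summable (fun k : ℕ => q ^ k) := summable_geometric_of_lt_one hq0.le hq1
    have hs := ((hs1.mul_left (K * Real.log 2)).add
      (hs0.mul_left (K * Real.log 4 + C - u 1))).mul_left ((Real.log 2)⁻¹ * (2 : ℝ) ^ (3 / 4 : ℝ))
    refine Summable.of_nonneg_of_le hBnn (fun k => ?_) hs
    have h2k : (1 : ℝ) ≤ 2 ^ k := one_le_pow₀ (by norm_num)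
    have e1 : (2 ^ k : ℝ)⁻¹ * (2 * 2 ^ k : ℝ) ^ (3 / 4 : ℝ) = (2 : ℝ) ^ (3 / 4 : ℝ) * q ^ k := by
      rw [Real.mul_rpow (by norm_num) (by positivity), hq, ← Real.rpow_natCast,
        ← Real.rpow_natCast, ← Real.rpow_mul (by norm_num), ← Real.rpow_mul (by norm_num),
        ← Real.rpow_neg (by norm_num), mul_left_comm, ← Real.rpow_add (by norm_num)]
      ring_nf
    have e2 : u (4 * 2 ^ k) - u (2 ^ k) ≤
        K * Real.log 2 * k + (K * Real.log 4 + C - u 1) := by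
      have h1 := hb (4 * 2 ^ k) (by linarith)
      rw [Real.log_mul (by norm_num) (by positivity), Real.log_pow] at h1
      have h2 := hu h2k
      linarith
    calc B k = (Real.log 2)⁻¹ * ((2 ^ k : ℝ)⁻¹ * (2 * 2 ^ k : ℝ) ^ (3 / 4 : ℝ)) *
          (u (4 * 2 ^ k) - u (2 ^ k)) := by rw [hB]; ring
      _ ≤ (Real.log 2)⁻¹ * ((2 : ℝ) ^ (3 / 4 : ℝ) * q ^ k) *
          (K * Real.log 2 * k + (K * Real.log 4 + C - u 1)) := by rw [e1]; gcongr
      _ = _ := by ring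
  calc ∫⁻ t in E, ENNReal.ofReal t⁻¹
      ≤ ∫⁻ t in ⋃ k : ℕ, E ∩ Set.Icc (2 ^ k : ℝ) (2 * 2 ^ k), ENNReal.ofReal t⁻¹ :=
        lintegral_mono_set hcover
    _ ≤ ∑' k : ℕ, ∫⁻ t in E ∩ Set.Icc (2 ^ k : ℝ) (2 * 2 ^ k), ENNReal.ofReal t⁻¹ :=
        lintegral_iUnion_le _ _
    _ ≤ ∑' k : ℕ, ENNReal.ofReal (B k) := ENNReal.tsum_le_tsum hblock
    _ < ⊤ := hsum.tsum_ofReal_lt_top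

/-! ### Consequences of the first main theorem -/

open ValueDistribution in
/-- The first main theorem, in the form `T(R, f) + T(R, 1/f) ≤ 2 T(R, f) + O(1)`. -/
lemma characteristic_add_inv_le {f : ℂ → ℂ} (hf : Meromorphic f) {R : ℝ} (hR : R ≠ 0) :
    characteristic f ⊤ R + characteristic f⁻¹ ⊤ R
      ≤ 2 * characteristic f ⊤ R + |Real.log ‖meromorphicTrailingCoeffAt f 0‖| := by
  have h := characteristic_sub_characteristic_inv_of_ne_zero hf hR
  have := neg_abs_le (Real.log ‖meromorphicTrailingCoeffAt f 0‖)
  linarith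

open ValueDistribution in
/-- The mean of `|log ‖f‖|` is `m(R, f) + m(R, 1/f)`. -/
lemma circleAverage_abs_log_le {f : ℂ → ℂ} (hf : Meromorphic f) {R : ℝ} (hR : 1 ≤ R) :
    Real.circleAverage (fun z => |Real.log ‖f z‖|) 0 R
      ≤ 2 * characteristic f ⊤ R + |Real.log ‖meromorphicTrailingCoeffAt f 0‖| := by
  refine le_trans ?_ (characteristic_add_inv_le hf (by linarith))
  have h1 : (fun z => |Real.log ‖f z‖|)
      = (fun z => Real.posLog ‖f z‖) + (fun z => Real.posLog ‖f⁻¹ z‖) := by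
    funext z
    simp only [Pi.add_apply, Pi.inv_apply, norm_inv]
    have a := Real.half_mul_log_add_log_abs (x := ‖f z‖)
    have b := Real.posLog_sub_posLog_inv (x := ‖f z‖)
    linarith
  have hm : MeromorphicOn f (Metric.sphere 0 |R|) := fun z _ => hf z
  rw [h1, Real.circleAverage_add hm.circleIntegrable_posLog_norm
    hm.inv.circleIntegrable_posLog_norm]
  have e1 := congrFun (proximity_top (f := f)) R
  have e2 := congrFun (proximity_top (f := f⁻¹)) R
  have n1 := logCounting_nonneg (f := f) (e := ⊤) hR
  have n2 := logCounting_nonneg (f := f⁻¹) (e := ⊤) hR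
  unfold characteristic
  simp only [Pi.add_apply]
  rw [e1, e2]
  linarith

open ValueDistribution MeromorphicOn Function in
/-- The number of zeros and poles in `|z| < R`, controlled by the characteristic at a larger
radius. -/
lemma sum_abs_divisor_mul_le {f : ℂ → ℂ} (hf : Meromorphic f) {R R' : ℝ} (hR : 1 ≤ R)
    (hRR' : R ≤ R') (S : Finset ℂ) (hS : (S : Set ℂ) ⊆ Metric.ball 0 R) :
    (∑ i ∈ S, |(divisor f (Metric.ball 0 R) i : ℝ)|) * (Real.log R' - Real.log R)
      ≤ 2 * characteristic f ⊤ R' + |Real.log ‖meromorphicTrailingCoeffAt f 0‖| := by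
  classical
  have hR' : 1 ≤ R' := hR.trans hRR'
  refine le_trans ?_ (characteristic_add_inv_le hf (by linarith))
  set D := divisor f Set.univ with hD
  set A := D⁺ + D⁻ with hA
  have hAa : ∀ z, A z = |D z| := fun z => by
    rw [hA, locallyFinsuppWithin.coe_add, Pi.add_apply, locallyFinsuppWithin.posPart_apply,
      locallyFinsuppWithin.negPart_apply, posPart_add_negPart]
  have h1 : locallyFinsuppWithin.logCounting A R'
      ≤ characteristic f ⊤ R' + characteristic f⁻¹ ⊤ R' := by
    rw [hA, map_add, Pi.add_apply, ← logCounting_zero, ← logCounting_top, ← logCounting_inv]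
    have n1 := proximity_nonneg (f := f) (a := ⊤) R'
    have n2 := proximity_nonneg (f := f⁻¹) (a := ⊤) R'
    unfold characteristic
    simp only [Pi.add_apply, Pi.zero_apply] at *
    linarith
  refine le_trans ?_ h1
  have h2 : ∑ i ∈ S, locallyFinsuppWithin.single i (A i) ≤ A := by
    intro z
    rw [locallyFinsuppWithin.coe_sum, Finset.sum_apply]
    simp only [locallyFinsuppWithin.single_apply, Finset.sum_ite_eq]
    split_ifs
    · exact le_rfl
    · rw [hAa]; positivity
  refine le_trans ?_ (locallyFinsuppWithin.logCounting_le h2 hR')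
  rw [map_sum, Finset.sum_apply, Finset.sum_mul]
  apply Finset.sum_le_sum
  intro i hi
  have hiR : ‖i‖ < R := by simpa using hS hi
  rw [locallyFinsuppWithin.logCounting_single_eq_log_sub_const (hiR.le.trans hRR'), hAa]
  have hdiv : divisor f (Metric.ball 0 R) i = D i := by
    rw [hD, MeromorphicOn.divisor_apply (fun z _ => hf z) (hS hi),
      MeromorphicOn.divisor_apply (fun z _ => hf z) (Set.mem_univ i)]
  rw [hdiv]
  have hlog : Real.log ‖i‖ ≤ Real.log R := by
    rcases eq_or_ne i 0 with rfl | h0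
    · simpa using Real.log_nonneg hR
    · exact Real.log_le_log (norm_pos_iff.2 h0) hiR.le
  push_cast
  exact mul_le_mul_of_nonneg_left (by linarith) (abs_nonneg _)

/-! ### Variation of the Poisson kernel and of canonical factors -/

/-- A Hölder-type bound for the logarithm, with exponent `1/2`, so that the resulting
singularities are integrable on circles. -/
lemma abs_log_sub_log_le {a b e : ℝ} (ha : 0 < a) (hb : 0 < b) (he : |a - b| ≤ e) :
    |Real.log a - Real.log b| ≤ 2 * √e * ((√a)⁻¹ + (√b)⁻¹) := by
  have key : ∀ {x y : ℝ}, 0 < x → 0 < y → x - y ≤ e → 0 ≤ e →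
      Real.log x - Real.log y ≤ 2 * √e * (√y)⁻¹ := by
    intro x y hx hy hxy he0
    rw [← Real.log_div hx.ne' hy.ne']
    have hs : 0 ≤ √e * (√y)⁻¹ := by positivity
    have h1 : x / y ≤ (1 + √e * (√y)⁻¹) ^ 2 := by
      have : (√e * (√y)⁻¹) ^ 2 = e / y := by
        rw [mul_pow, inv_pow, Real.sq_sqrt he0, Real.sq_sqrt hy.le, div_eq_mul_inv]
      have h2 : x / y ≤ 1 + e / y := by
        rw [div_le_iff₀ hy, add_mul, div_mul_cancel₀ _ hy.ne']
        linarith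
      nlinarith
    calc Real.log (x / y) ≤ Real.log ((1 + √e * (√y)⁻¹) ^ 2) :=
          Real.log_le_log (div_pos hx hy) h1
      _ = 2 * Real.log (1 + √e * (√y)⁻¹) := by rw [Real.log_pow]; norm_num
      _ ≤ 2 * (√e * (√y)⁻¹) := by
          have := Real.log_le_sub_one_of_pos (show 0 < 1 + √e * (√y)⁻¹ by positivity)
          linarith
      _ = _ := by ring
  have he0 : 0 ≤ e := (abs_nonneg _).trans he
  have h1 := key ha hb ((le_abs_self _).trans he) he0
  have h2 := key hb ha (by rw [abs_sub_comm] at he; exact (le_abs_self _).trans he) he0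
  have p1 : 0 ≤ 2 * √e * (√a)⁻¹ := by positivity
  have p2 : 0 ≤ 2 * √e * (√b)⁻¹ := by positivity
  rw [abs_le]
  constructor <;> linarith

open Complex Metric in
/-- Variation of `log ‖(R² - conj(i) u) / (R (u - i))‖` between two points at distance at least `δ`
from the circle `|z| = R`: the numerator is at least `R δ`, and the denominator gives the integrable
singularity at `i`. -/
lemma abs_log_canonicalFactor_sub_le {R δ : ℝ} (hδ : 0 < δ) {i z w : ℂ} (hi : i ∈ ball (0 : ℂ) R)
    (hz : ‖z‖ ≤ R - δ) (hw : ‖w‖ ≤ R - δ) (hzi : z ≠ i) (hwi : w ≠ i) :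
    |Real.log ‖canonicalFactor R i w‖ - Real.log ‖canonicalFactor R i z‖|
      ≤ 4 * √(‖w - z‖ / δ) + 2 * √‖w - z‖ * ((√‖w - i‖)⁻¹ + (√‖z - i‖)⁻¹) := by
  have hR : 0 < R := pos_of_mem_ball hi
  have hiR : ‖i‖ < R := by simpa using hi
  have hnum : ∀ u : ℂ, ‖u‖ ≤ R - δ → R * δ ≤ ‖(R : ℂ) ^ 2 - (starRingEnd ℂ) i * u‖ := by
    intro u hu
    have h1 : ‖(R : ℂ) ^ 2‖ = R ^ 2 := by simp
    have h2 : ‖(starRingEnd ℂ) i * u‖ ≤ R * (R - δ) := by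
      rw [norm_mul, RCLike.norm_conj]
      gcongr
    have := norm_sub_norm_le ((R : ℂ) ^ 2) ((starRingEnd ℂ) i * u)
    rw [h1] at this
    nlinarith
  have hlog : ∀ u : ℂ, ‖u‖ ≤ R - δ → u ≠ i → Real.log ‖canonicalFactor R i u‖ =
      Real.log ‖(R : ℂ) ^ 2 - (starRingEnd ℂ) i * u‖ - (Real.log R + Real.log ‖u - i‖) := by
    intro u hu hui
    have h0 := (mul_pos hR hδ).trans_le (hnum u hu)
    rw [canonicalFactor_apply, norm_div, norm_mul, Complex.norm_real, Real.norm_of_nonneg hR.le,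
      Real.log_div h0.ne' (mul_ne_zero hR.ne' (norm_ne_zero_iff.2 (sub_ne_zero.2 hui))),
      Real.log_mul hR.ne' (norm_ne_zero_iff.2 (sub_ne_zero.2 hui))]
  rw [hlog w hw hwi, hlog z hz hzi]
  have hA := abs_log_sub_log_le (e := R * ‖w - z‖) ((mul_pos hR hδ).trans_le (hnum w hw))
    ((mul_pos hR hδ).trans_le (hnum z hz)) (by
      refine (abs_norm_sub_norm_le _ _).trans ?_
      rw [show (R : ℂ) ^ 2 - (starRingEnd ℂ) i * w - ((R : ℂ) ^ 2 - (starRingEnd ℂ) i * z)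
        = - ((starRingEnd ℂ) i * (w - z)) by ring, norm_neg, norm_mul, RCLike.norm_conj]
      gcongr)
  have hB := abs_log_sub_log_le (e := ‖w - z‖) (norm_pos_iff.2 (sub_ne_zero.2 hwi))
    (norm_pos_iff.2 (sub_ne_zero.2 hzi)) (by
      refine (abs_norm_sub_norm_le _ _).trans ?_
      rw [sub_sub_sub_cancel_right])
  have hinv : ∀ u : ℂ, ‖u‖ ≤ R - δ →
      √(R * ‖w - z‖) * (√‖(R : ℂ) ^ 2 - (starRingEnd ℂ) i * u‖)⁻¹ ≤ √(‖w - z‖ / δ) := by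
    intro u hu
    rw [← Real.sqrt_inv, ← Real.sqrt_mul (by positivity)]
    apply Real.sqrt_le_sqrt
    calc R * ‖w - z‖ * ‖(R : ℂ) ^ 2 - (starRingEnd ℂ) i * u‖⁻¹
        ≤ R * ‖w - z‖ * (R * δ)⁻¹ := by
          gcongr
          exact hnum u hu
      _ = ‖w - z‖ / δ := by field_simp
  have h1 := hinv w hw
  have h2 := hinv z hz
  rw [abs_le] at *
  constructor <;> nlinarith [hA.1, hA.2, hB.1, hB.2]

open Complex Metric in
/-- Variation of the Poisson kernel between two points at distance at least `δ` from the circle. -/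
lemma abs_re_herglotz_sub_le {R δ : ℝ} (hδ : 0 < δ) {z w ζ : ℂ} (hζ : ‖ζ‖ = R)
    (hz : ‖z‖ ≤ R - δ) (hw : ‖w‖ ≤ R - δ) :
    |(herglotzRieszKernel 0 w ζ).re - (herglotzRieszKernel 0 z ζ).re|
      ≤ 2 * R * ‖w - z‖ / δ ^ 2 := by
  have hd : ∀ u : ℂ, ‖u‖ ≤ R - δ → δ ≤ ‖ζ - u‖ := by
    intro u hu
    have := norm_sub_norm_le ζ u
    linarith
  have hne : ∀ u : ℂ, ‖u‖ ≤ R - δ → ζ - u ≠ 0 := fun u hu =>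
    norm_pos_iff.1 (hδ.trans_le (hd u hu))
  rw [← Complex.sub_re]
  refine (Complex.abs_re_le_norm _).trans ?_
  have h1 := hne w hw
  have h2 := hne z hz
  have : herglotzRieszKernel 0 w ζ - herglotzRieszKernel 0 z ζ
      = 2 * ζ * (w - z) / ((ζ - w) * (ζ - z)) := by
    simp only [herglotzRieszKernel_def, sub_zero]
    field_simp
    ring
  rw [this, norm_div, norm_mul, norm_mul, norm_mul, hζ, Complex.norm_ofNat, pow_two]
  gcongr
  · rw [← hζ]; positivity
  · exact hd w hw
  · exact hd z hz

/-! ### The estimate for the shift quotient -/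

open Complex Metric MeromorphicOn in
/-- Pointwise form of the estimate: the difference of two instances of the Poisson–Jensen
formula. -/
lemma log_sub_log_le {f : ℂ → ℂ} (hf : Meromorphic f) (hord : ∀ z, meromorphicOrderAt f z ≠ ⊤)
    {R δ : ℝ} (hδ : 0 < δ) {z w : ℂ} (hz : ‖z‖ ≤ R - δ) (hw : ‖w‖ ≤ R - δ)
    (gz : AnalyticAt ℂ f z ∧ f z ≠ 0) (gw : AnalyticAt ℂ f w ∧ f w ≠ 0)
    (S : Finset ℂ) (hS : (S : Set ℂ) = (divisor f (ball 0 R)).support) :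
    Real.log ‖f w‖ - Real.log ‖f z‖ ≤
      2 * R * ‖w - z‖ / δ ^ 2 * Real.circleAverage (fun ζ => |Real.log ‖f ζ‖|) 0 R
      + ∑ i ∈ S, |(divisor f (ball 0 R) i : ℝ)| * (4 * √(‖w - z‖ / δ)
          + 2 * √‖w - z‖ * ((√‖w - i‖)⁻¹ + (√‖z - i‖)⁻¹)) := by
  have hR : 0 < R := by linarith [norm_nonneg z]
  have hwb : w ∈ ball (0 : ℂ) R := by simp; linarith
  have hzb : z ∈ ball (0 : ℂ) R := by simp; linarith
  have hfm : MeromorphicOn f (ball 0 R) := fun z _ => hf z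
  have hfs : CircleIntegrable (fun ζ => Real.log ‖f ζ‖) 0 R :=
    MeromorphicOn.circleIntegrable_log_norm (fun z _ => hf z)
  have pw := poisson_jensen hf hord hwb (good_order gw)
  have pz := poisson_jensen hf hord hzb (good_order gz)
  rw [gw.1.meromorphicTrailingCoeffAt_of_ne_zero gw.2] at pw
  rw [gz.1.meromorphicTrailingCoeffAt_of_ne_zero gz.2] at pz
  have hsupp : ∀ u : ℂ, Function.support (fun i => (divisor f (ball 0 R) i : ℝ) *
      Real.log ‖canonicalFactor R i u‖) ⊆ S := by
    intro u i hi
    rw [hS]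
    intro h
    simp [h] at hi
  rw [finsum_eq_sum_of_support_subset _ (hsupp w)] at pw
  rw [finsum_eq_sum_of_support_subset _ (hsupp z)] at pz
  have hI : ∀ u ∈ ball (0 : ℂ) R, CircleIntegrable
      ((Complex.re ∘ herglotzRieszKernel 0 u) • (fun z => Real.log ‖f z‖)) 0 R := fun u hu =>
    CircleIntegrable.continuousOn_smul hfs
      (Complex.continuous_re.comp_continuousOn (continuousOn_herglotzRieszKernel_sphere hu))
  have h1 : Real.circleAverage
        ((Complex.re ∘ herglotzRieszKernel 0 w) • (fun z => Real.log ‖f z‖)) 0 R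
      - Real.circleAverage ((Complex.re ∘ herglotzRieszKernel 0 z) • (fun z => Real.log ‖f z‖)) 0 R
      ≤ 2 * R * ‖w - z‖ / δ ^ 2 * Real.circleAverage (fun ζ => |Real.log ‖f ζ‖|) 0 R := by
    rw [← Real.circleAverage_sub (hI w hwb) (hI z hzb), ← smul_eq_mul,
      ← Real.circleAverage_fun_smul]
    apply Real.circleAverage_mono ((hI w hwb).sub (hI z hzb))
    · exact hfs.abs.const_smul
    · intro ζ hζ
      have hζ' : ‖ζ‖ = R := by simpa [abs_of_pos hR] using hζ
      simp only [Pi.sub_apply, Pi.mul_apply, Function.comp_apply, smul_eq_mul]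
      rw [← sub_mul]
      refine (le_abs_self _).trans ?_
      rw [abs_mul]
      gcongr
      exact abs_re_herglotz_sub_le hδ hζ' hz hw
  have h2 : ∑ i ∈ S, (divisor f (ball 0 R) i : ℝ) * Real.log ‖canonicalFactor R i z‖
      - ∑ i ∈ S, (divisor f (ball 0 R) i : ℝ) * Real.log ‖canonicalFactor R i w‖
      ≤ ∑ i ∈ S, |(divisor f (ball 0 R) i : ℝ)| * (4 * √(‖w - z‖ / δ)
          + 2 * √‖w - z‖ * ((√‖w - i‖)⁻¹ + (√‖z - i‖)⁻¹)) := by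
    rw [← Finset.sum_sub_distrib]
    apply Finset.sum_le_sum
    intro i hi
    have hi' : divisor f (ball 0 R) i ≠ 0 := by
      have : i ∈ (divisor f (ball 0 R)).support := by rw [← hS]; exact hi
      exact this
    have hib : i ∈ ball (0 : ℂ) R := (divisor f (ball 0 R)).supportWithinDomain hi'
    have hne : ∀ u : ℂ, (AnalyticAt ℂ f u ∧ f u ≠ 0) → u ≠ i := by
      rintro u gu rfl
      apply hi'
      rw [hfm.divisor_apply hib, good_order gu]
      rfl
    rw [← mul_sub]
    refine (le_abs_self _).trans ?_
    rw [abs_mul, abs_sub_comm]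
    gcongr
    exact abs_log_canonicalFactor_sub_le hδ hib hz hw (hne z gz) (hne w gw)
  linarith

open Complex Metric MeromorphicOn ValueDistribution in
/-- Averaged form of the estimate: `m(r, f(z+η)/f(z))` in terms of the characteristic at the larger
radius `R'`, for `r + ‖η‖ + δ ≤ R < R'`. The first term bounds the change of the Poisson integral,
the second the contribution of the zeros and poles in `|z| < R`. -/
lemma proximityM_quotient_le {f : ℂ → ℂ} (hf : Meromorphic f)
    (hord : ∀ z, meromorphicOrderAt f z ≠ ⊤) {η : ℂ} {r R R' δ : ℝ} (hr : 1 ≤ r) (hδ : 0 < δ)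
    (hrR : r + ‖η‖ + δ ≤ R) (hRR' : R < R') :
    proximityM (fun z => f (z + η) / f z) r ≤
      (2 * R * ‖η‖ / δ ^ 2 + (Real.log R' - Real.log R)⁻¹ *
        (4 * √(‖η‖ / δ) + 4 * √‖η‖ * sinConst * (√r)⁻¹)) *
      (2 * characteristic f ⊤ R' + |Real.log ‖meromorphicTrailingCoeffAt f 0‖|) := by
  have hr0 : 0 < r := by linarith
  have hR1 : 1 ≤ R := by linarith [norm_nonneg η]
  have hR0 : 0 < R := by linarith
  set c := |Real.log ‖meromorphicTrailingCoeffAt f 0‖| with hc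
  have hfin : (divisor f (ball 0 R)).support.Finite :=
    MeromorphicOn.divisor_ball_support_finite (fun z _ => hf z)
  set S := hfin.toFinset with hSdef
  have hS : (S : Set ℂ) = (divisor f (ball 0 R)).support := hfin.coe_toFinset
  set M := Real.circleAverage (fun ζ => |Real.log ‖f ζ‖|) 0 R with hM
  set K := 2 * R * ‖η‖ / δ ^ 2 with hK
  have hK0 : 0 ≤ K := by positivity
  have hM0 : 0 ≤ M := by
    rw [hM, ← Real.circleAverage_const (0 : ℝ) 0 R]
    exact Real.circleAverage_mono (circleIntegrable_const _ _ _)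
      (MeromorphicOn.circleIntegrable_log_norm (fun z _ => hf z)).abs (fun _ _ => abs_nonneg _)
  have hML : M ≤ 2 * characteristic f ⊤ R' + c := by
    have h1 := circleAverage_abs_log_le hf hR1
    have h2 := characteristic_monotoneOn hf (Set.mem_Ioi.2 hR0)
      (Set.mem_Ioi.2 (hR0.trans hRR')) hRR'.le
    linarith
  set B : ℂ → ℝ := fun z => K * M + ∑ i ∈ S, |(divisor f (ball 0 R) i : ℝ)| *
    (4 * √(‖η‖ / δ) + 2 * √‖η‖ * ((√‖z - (i - η)‖)⁻¹ + (√‖z - i‖)⁻¹)) with hB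
  have hterm : ∀ i, CircleIntegrable (fun z => 4 * √(‖η‖ / δ) + 2 * √‖η‖ *
      ((√‖z - (i - η)‖)⁻¹ + (√‖z - i‖)⁻¹)) 0 r := by
    intro i
    refine (circleIntegrable_const _ _ _).add ?_
    exact ((circleIntegrable_inv_sqrt hr0 _).add (circleIntegrable_inv_sqrt hr0 _)).const_smul
      (a := 2 * √‖η‖)
  have hterm' : ∀ i ∈ S, CircleIntegrable (fun z => |(divisor f (ball 0 R) i : ℝ)| *
      (4 * √(‖η‖ / δ) + 2 * √‖η‖ * ((√‖z - (i - η)‖)⁻¹ + (√‖z - i‖)⁻¹))) 0 r := fun i _ =>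
    (hterm i).const_smul (a := |(divisor f (ball 0 R) i : ℝ)|)
  have hBsum := CircleIntegrable.fun_sum S hterm'
  have hBint : CircleIntegrable B 0 r := (circleIntegrable_const _ _ _).add hBsum
  have hB0 : ∀ z, 0 ≤ B z := fun z => by positivity
  have hBavg : Real.circleAverage B 0 r ≤ K * M + (∑ i ∈ S, |(divisor f (ball 0 R) i : ℝ)|) *
      (4 * √(‖η‖ / δ) + 4 * √‖η‖ * sinConst * (√r)⁻¹) := by
    rw [hB, Real.circleAverage_fun_add (circleIntegrable_const _ _ _) hBsum,
      Real.circleAverage_const, Real.circleAverage_fun_sum hterm', Finset.sum_mul]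
    gcongr with i hi
    have hmul : ∀ (a : ℝ) (g : ℂ → ℝ), Real.circleAverage (fun z => a * g z) 0 r
        = a * Real.circleAverage g 0 r := fun a g => by
      simpa only [smul_eq_mul] using
        Real.circleAverage_fun_smul (𝕜 := ℝ) (a := a) (f := g) (c := 0) (R := r)
    rw [hmul]
    apply mul_le_mul_of_nonneg_left _ (abs_nonneg _)
    have hsumi : CircleIntegrable (fun z => (√‖z - (i - η)‖)⁻¹ + (√‖z - i‖)⁻¹) 0 r :=
      (circleIntegrable_inv_sqrt hr0 _).add (circleIntegrable_inv_sqrt hr0 _)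
    have hsumi' : CircleIntegrable (fun z => 2 * √‖η‖ *
        ((√‖z - (i - η)‖)⁻¹ + (√‖z - i‖)⁻¹)) 0 r := hsumi.const_smul (a := 2 * √‖η‖)
    rw [Real.circleAverage_fun_add (circleIntegrable_const _ _ _) hsumi',
      Real.circleAverage_const, hmul, Real.circleAverage_fun_add
      (circleIntegrable_inv_sqrt hr0 _) (circleIntegrable_inv_sqrt hr0 _)]
    have h1 := circleAverage_inv_sqrt_le hr0 (i - η)
    have h2 := circleAverage_inv_sqrt_le hr0 i
    have h3 : 0 ≤ 2 * √‖η‖ := by positivity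
    nlinarith
  have hlog : 0 < Real.log R' - Real.log R := sub_pos.2 (Real.log_lt_log hR0 hRR')
  have hn : ∑ i ∈ S, |(divisor f (ball 0 R) i : ℝ)|
      ≤ (Real.log R' - Real.log R)⁻¹ * (2 * characteristic f ⊤ R' + c) := by
    rw [← div_eq_inv_mul, le_div_iff₀ hlog]
    exact sum_abs_divisor_mul_le hf hR1 hRR'.le S
      (hS.trans_subset (divisor f (ball 0 R)).supportWithinDomain)
  -- The pointwise bound may fail on a discrete set, so it is expressed by replacing the integrand
  -- with its minimum with `B`, which has the same circle average.
  have hshift : Meromorphic (fun z => f (z + η)) := fun z =>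
    (hf (z + η)).comp_analyticAt (g := fun z => z + η) (by fun_prop)
  have hshord : ∀ z, meromorphicOrderAt (fun z => f (z + η)) z ≠ ⊤ := by
    intro z
    have h := meromorphicOrderAt_comp_of_deriv_ne_zero (f := f) (g := fun z => z + η) (x := z)
      (by fun_prop) (by simp)
    change meromorphicOrderAt (f ∘ fun z => z + η) z ≠ ⊤
    rw [h]
    exact hord _
  have hqm : MeromorphicOn (fun z => f (z + η) / f z) (sphere 0 |r|) := fun z _ =>
    (hshift z).div (hf z)
  have hqi := hqm.circleIntegrable_posLog_norm
  have hev : (fun z => Real.posLog ‖f (z + η) / f z‖) =ᶠ[codiscreteWithin (sphere 0 |r|)]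
      (fun z => min (Real.posLog ‖f (z + η) / f z‖) (B z)) := by
    filter_upwards [eventually_good hf hord (sphere 0 |r|),
      eventually_good hshift hshord (sphere 0 |r|),
      Filter.self_mem_codiscreteWithin (sphere (0 : ℂ) |r|)] with z gz gz' hz
    have hzr : ‖z‖ = r := by simpa [abs_of_pos hr0] using hz
    have gw : AnalyticAt ℂ f (z + η) ∧ f (z + η) ≠ 0 := by
      refine ⟨?_, gz'.2⟩
      have h : AnalyticAt ℂ ((fun z => f (z + η)) ∘ fun z => z - η) (z + η) := by
        apply AnalyticAt.comp _ (by fun_prop)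
        simpa using gz'.1
      refine h.congr (Filter.Eventually.of_forall fun u => ?_)
      simp
    have hw : ‖z + η‖ ≤ R - δ := by
      have := norm_add_le z η
      linarith
    have hl := log_sub_log_le hf hord hδ (by linarith [norm_nonneg η]) hw gz gw S hS
    simp only [add_sub_cancel_left] at hl
    rw [← Real.log_div (norm_ne_zero_iff.2 gw.2) (norm_ne_zero_iff.2 gz.2), ← norm_div] at hl
    rw [min_eq_left]
    rw [Real.posLog_apply]
    refine max_le (hB0 z) (hl.trans_eq ?_)
    simp only [hB, sub_sub_eq_add_sub]
    rfl
  rw [proximityM_eq, Real.circleAverage_congr_codiscreteWithin hev hr0.ne']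
  have hmono := Real.circleAverage_mono (hqi.congr_codiscreteWithin hev) hBint
    (fun z _ => min_le_right _ _)
  refine hmono.trans (hBavg.trans ?_)
  have hs := sinConst_nonneg
  have hq : 0 ≤ 4 * √(‖η‖ / δ) + 4 * √‖η‖ * sinConst * (√r)⁻¹ := by positivity
  refine (add_le_add (mul_le_mul_of_nonneg_left hML hK0)
    (mul_le_mul_of_nonneg_right hn hq)).trans_eq ?_
  ring

/-! ### Choice of radii and conclusion -/

open ValueDistribution in
/-- A meromorphic function that vanishes identically near some point vanishes off a discrete set, so
its characteristic is zero. -/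
lemma order_ne_top_of_characteristic_ne_zero {f : ℂ → ℂ} (hf : Meromorphic f) {r : ℝ} (hr : r ≠ 0)
    (hT : characteristic f ⊤ r ≠ 0) (z : ℂ) : meromorphicOrderAt f z ≠ ⊤ := by
  refine hf.exists_meromorphicOrderAt_ne_top_iff_forall.1 ?_ z
  by_contra! hall
  apply hT
  have h0 : f =ᶠ[codiscrete ℂ] (fun _ => 0) := by
    change {z | f z = 0} ∈ codiscrete ℂ
    rw [mem_codiscrete]
    intro x
    rw [Filter.disjoint_principal_right, compl_compl]
    exact meromorphicOrderAt_eq_top_iff.1 (hall x)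
  rw [characteristic_congr_codiscrete h0 hr]
  have : (fun _ => 0 : ℂ → ℂ) = 0 := rfl
  simp [characteristic, proximity, this, Real.circleAverage_const]

/-- The coefficient of the characteristic in `proximityM_quotient_le` tends to zero for the choice
`R = r + r^(3/4) / 2`, `R' = r + r^(3/4)`, `δ = r^(3/4) / 4`. -/
lemma tendsto_error {a s : ℝ} (ha : 0 ≤ a) (hs : 0 ≤ s) :
    Tendsto (fun r : ℝ => 2 * (r + r ^ (3/4 : ℝ) / 2) * a / (r ^ (3/4 : ℝ) / 4) ^ 2 +
      (Real.log (r + r ^ (3/4 : ℝ)) - Real.log (r + r ^ (3/4 : ℝ) / 2))⁻¹ *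
        (4 * √(a / (r ^ (3/4 : ℝ) / 4)) + 4 * √a * s * (√r)⁻¹)) atTop (𝓝 0) := by
  have ht : Tendsto (fun r : ℝ => (r ^ (1/8 : ℝ))⁻¹) atTop (𝓝 0) :=
    (tendsto_rpow_atTop (by norm_num)).inv_tendsto_atTop
  have hlim : Tendsto (fun r : ℝ => 64 * a * (r ^ (1/8 : ℝ))⁻¹ ^ 4 + 32 * √a * (r ^ (1/8 : ℝ))⁻¹
      + 16 * √a * s * (r ^ (1/8 : ℝ))⁻¹ ^ 2) atTop (𝓝 0) := by
    have := (((ht.pow 4).const_mul (64 * a)).add (ht.const_mul (32 * √a))).add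
      ((ht.pow 2).const_mul (16 * √a * s))
    simpa using this
  have key : ∀ r : ℝ, 1 ≤ r → ∃ t : ℝ, 1 ≤ t ∧ r ^ (1/8 : ℝ) = t ∧ r = t ^ 8 ∧
      r ^ (3/4 : ℝ) = t ^ 6 := by
    intro r hr
    have hr0 : 0 ≤ r := by linarith
    refine ⟨r ^ (1/8 : ℝ), Real.one_le_rpow hr (by norm_num), rfl, ?_, ?_⟩
    · rw [← Real.rpow_natCast, ← Real.rpow_mul hr0]; norm_num
    · rw [← Real.rpow_natCast, ← Real.rpow_mul hr0]; norm_num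
  have hlogpos : ∀ t : ℝ, 1 ≤ t →
      t ^ 6 / (4 * t ^ 8) ≤ Real.log (t ^ 8 + t ^ 6) - Real.log (t ^ 8 + t ^ 6 / 2) := by
    intro t h1
    have h0 : 0 < t := by linarith
    rw [← Real.log_div (by positivity) (by positivity)]
    refine le_trans ?_ (Real.one_sub_inv_le_log_of_pos (by positivity))
    rw [inv_div, one_sub_div (by positivity), div_le_div_iff₀ (by positivity) (by positivity)]
    have : t ^ 6 ≤ t ^ 8 := pow_le_pow_right₀ h1 (by norm_num)
    have h6 : 0 < t ^ 6 := by positivity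
    nlinarith
  apply tendsto_of_tendsto_of_tendsto_of_le_of_le' tendsto_const_nhds hlim
  · filter_upwards [eventually_ge_atTop 1] with r hr
    obtain ⟨t, h1, -, h2, h3⟩ := key r hr
    rw [h3, h2]
    have h0 : 0 < t := by linarith
    have := (show 0 < t ^ 6 / (4 * t ^ 8) by positivity).trans_le (hlogpos t h1)
    positivity
  · filter_upwards [eventually_ge_atTop 1] with r hr
    obtain ⟨t, h1, h4, h2, h3⟩ := key r hr
    rw [h4, h3, h2]
    have h0 : 0 < t := by linarith
    have hl := hlogpos t h1
    have hle : t ^ 6 ≤ t ^ 8 := pow_le_pow_right₀ h1 (by norm_num)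
    have e1 : √(t ^ 8) = t ^ 4 := by
      rw [show t ^ 8 = (t ^ 4) ^ 2 by ring, Real.sqrt_sq (by positivity)]
    have e2 : √(a / (t ^ 6 / 4)) = 2 * √a / t ^ 3 := by
      rw [Real.sqrt_div ha, show t ^ 6 / 4 = (t ^ 3 / 2) ^ 2 by ring,
        Real.sqrt_sq (by positivity)]
      field_simp
    rw [e1, e2]
    have hinv := inv_anti₀ (show 0 < t ^ 6 / (4 * t ^ 8) by positivity) hl
    have p1 : 2 * (t ^ 8 + t ^ 6 / 2) * a / (t ^ 6 / 4) ^ 2 ≤ 64 * a * t⁻¹ ^ 4 := by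
      calc 2 * (t ^ 8 + t ^ 6 / 2) * a / (t ^ 6 / 4) ^ 2
          ≤ 2 * (t ^ 8 + t ^ 8) * a / (t ^ 6 / 4) ^ 2 := by gcongr; linarith [pow_pos h0 6]
        _ = _ := by field_simp; ring
    have p2 : (Real.log (t ^ 8 + t ^ 6) - Real.log (t ^ 8 + t ^ 6 / 2))⁻¹ *
        (4 * (2 * √a / t ^ 3) + 4 * √a * s * (t ^ 4)⁻¹)
        ≤ 32 * √a * t⁻¹ + 16 * √a * s * t⁻¹ ^ 2 := by
      refine (mul_le_mul_of_nonneg_right hinv (by positivity)).trans_eq ?_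
      field_simp
      ring
    linarith

open ValueDistribution in
/-- Finite order gives a polynomial bound `log T(r) ≤ K log r` for large `r`. -/
lemma exists_log_charT_le {f : ℂ → ℂ} (horder : growthOrder f < ⊤) :
    ∃ K : ℝ, 0 ≤ K ∧ ∀ᶠ r in atTop, Real.log (charT f r) ≤ K * Real.log r := by
  obtain ⟨K, hK, -⟩ := EReal.lt_iff_exists_real_btwn.1 horder
  refine ⟨max K 0, le_max_right _ _, ?_⟩
  filter_upwards [eventually_lt_of_limsup_lt hK, eventually_gt_atTop 1] with r h1 h2
  have hl : 0 < Real.log r := Real.log_pos h2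
  have h3 : logPlus (charT f r) / Real.log r < K := by exact_mod_cast h1
  rw [div_lt_iff₀ hl] at h3
  calc Real.log (charT f r) ≤ logPlus (charT f r) := le_max_right _ _
    _ ≤ K * Real.log r := h3.le
    _ ≤ max K 0 * Real.log r := by gcongr; exact le_max_left _ _

/-- **Lemma 2.3 (Halburd–Korhonen).** For a non-constant meromorphic function `f` of
finite order and `η ≠ 0`, one has `m(r, f(z+η)/f(z)) = S(r, f)` outside a set of finite
logarithmic measure. -/
theorem proximity_shift_quotient_small
    (f : ℂ → ℂ) (hf : MeromorphicOn f Set.univ) (hnc : ¬∃ c : ℂ, ∀ z : ℂ, f z = c)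
    (horder : growthOrder f < ⊤) (η : ℂ) (hη : η ≠ 0) :
    ∃ E : Set ℝ, FiniteLogMeasure E ∧
      Filter.Tendsto
        (fun r : ℝ => proximityM (fun z => f (z + η) / f z) r / charT f r)
        (Filter.atTop ⊓ Filter.principal Eᶜ) (𝓝 0) := by
  have hm : Meromorphic f := fun z => hf z (Set.mem_univ z)
  by_cases hT : ∃ r₀ : ℝ, 1 ≤ r₀ ∧ 0 < charT f r₀
  swap
  · -- the characteristic vanishes on `[1, ∞)`, so the quotient is `m / 0 = 0` there
    push Not at hT
    refine ⟨∅, ⟨MeasurableSet.empty, Set.empty_subset _, by simp⟩, ?_⟩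
    refine tendsto_const_nhds.congr' (Filter.Eventually.filter_mono inf_le_left ?_)
    filter_upwards [eventually_ge_atTop 1] with r hr
    have h0 : charT f r = 0 := by
      refine le_antisymm (hT r hr) ?_
      rw [charT_eq hf (by linarith)]
      exact ValueDistribution.characteristic_nonneg hr
    simp [h0]
  obtain ⟨r₀, hr₀, hT₀⟩ := hT
  have hord := order_ne_top_of_characteristic_ne_zero hm (r := r₀) (by linarith)
    (by rw [← charT_eq hf (by linarith)]; exact hT₀.ne')
  have hmono : ∀ x y : ℝ, 0 < x → x ≤ y → charT f x ≤ charT f y := by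
    intro x y hx hxy
    rw [charT_eq hf hx, charT_eq hf (hx.trans_le hxy)]
    exact ValueDistribution.characteristic_monotoneOn hm hx (hx.trans_le hxy) hxy
  have hpos : ∀ x, r₀ ≤ x → 0 < charT f x := fun x hx =>
    hT₀.trans_le (hmono _ _ (by linarith) hx)
  set u : ℝ → ℝ := fun r => Real.log (charT f (max r r₀)) with hu
  have humono : Monotone u := by
    intro x y hxy
    have h1 : max x r₀ ≤ max y r₀ := max_le_max_right _ hxy
    exact Real.log_le_log (hpos _ (le_max_right _ _))
      (hmono _ _ (by linarith [le_max_right x r₀]) h1)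
  obtain ⟨K, hK, hgrow⟩ := exists_log_charT_le horder
  obtain ⟨r₁, hr₁⟩ := eventually_atTop.1 hgrow
  have hub : ∀ r, 1 ≤ r → u r ≤ K * Real.log r + |u (max r₀ r₁)| := by
    intro r hr
    rcases le_total (max r₀ r₁) r with h | h
    · have h1 := hr₁ r ((le_max_right _ _).trans h)
      have h2 : u r = Real.log (charT f r) := by
        simp only [hu, max_eq_left ((le_max_left _ _).trans h)]
      linarith [abs_nonneg (u (max r₀ r₁))]
    · have h1 := humono h
      have h2 : 0 ≤ K * Real.log r := mul_nonneg hK (Real.log_nonneg hr)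
      linarith [le_abs_self (u (max r₀ r₁))]
  refine ⟨_, finiteLogMeasure_of_monotone humono hub, ?_⟩
  set c := |Real.log ‖meromorphicTrailingCoeffAt f 0‖| with hc
  have hlim := (tendsto_error (norm_nonneg η) sinConst_nonneg).mul_const
    (4 + c / charT f r₀)
  rw [zero_mul] at hlim
  apply tendsto_of_tendsto_of_tendsto_of_le_of_le' tendsto_const_nhds (hlim.mono_left inf_le_left)
  · refine Filter.Eventually.filter_mono inf_le_left ?_
    filter_upwards [eventually_ge_atTop r₀] with r hr
    refine div_nonneg ?_ (hpos r hr).le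
    rw [proximityM_eq]
    exact Real.circleAverage_nonneg_of_nonneg (f := fun z => Real.posLog ‖f (z + η) / f z‖)
      fun _ _ => Real.posLog_nonneg
  · have hd : ∀ᶠ r : ℝ in atTop, 4 * ‖η‖ ≤ r ^ (3/4 : ℝ) :=
      (tendsto_rpow_atTop (by norm_num)).eventually_ge_atTop _
    rw [Filter.eventually_inf_principal]
    filter_upwards [eventually_ge_atTop r₀, eventually_gt_atTop 1, hd] with r hr hr1 hdr hE
    have hTr := hpos r hr
    have hd0 : 0 < r ^ (3/4 : ℝ) := Real.rpow_pos_of_pos (by linarith) _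
    have hdouble : charT f (r + r ^ (3/4 : ℝ)) ≤ 2 * charT f r := by
      have h1 : u (r + r ^ (3/4 : ℝ)) ≤ u r + Real.log 2 := by
        by_contra! h
        exact hE ⟨hr1, h⟩
      simp only [hu, max_eq_left hr, max_eq_left (show r₀ ≤ r + r ^ (3/4 : ℝ) by linarith)] at h1
      rw [← Real.log_mul hTr.ne' two_ne_zero] at h1
      have := (Real.log_le_log_iff (hpos _ (by linarith)) (by linarith)).1 h1
      linarith
    have hmain := proximityM_quotient_le hm hord (η := η) (r := r) (R := r + r ^ (3/4 : ℝ) / 2)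
      (R' := r + r ^ (3/4 : ℝ)) (δ := r ^ (3/4 : ℝ) / 4) hr1.le (by linarith) (by linarith)
      (by linarith)
    rw [← charT_eq hf (by linarith), ← hc] at hmain
    rw [div_le_iff₀ hTr]
    refine hmain.trans ?_
    have hlogpos : 0 ≤ Real.log (r + r ^ (3/4 : ℝ)) - Real.log (r + r ^ (3/4 : ℝ) / 2) :=
      sub_nonneg.2 (Real.log_le_log (by linarith) (by linarith))
    have hs := sinConst_nonneg
    refine (mul_le_mul_of_nonneg_left ?_ (by positivity)).trans_eq (mul_assoc _ _ _).symm
    have h2 : c ≤ c / charT f r₀ * charT f r := by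
      rw [div_mul_eq_mul_div, le_div_iff₀ hT₀]
      exact mul_le_mul_of_nonneg_left (hmono _ _ (by linarith) hr) (abs_nonneg _)
    linarith
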